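/- arXiv:math/0609163 — 2 statements merged into one kernel-verified Lean document; each statement's English description precedes it below -/
import Mathlib

section
/- Let 0 < α0 < α1, σ0, σ1 > 0, p ∈ (0,1), and let F(x) = p(1 − (x/σ0)^{−α0})1_{x≥σ0} + (1−p)(1 − (x/σ1)^{−α1})1_{x≥σ1} be the Pareto mixture c.d.f. Write F(x) = exp(−σ^{α0}(x) x^{−α0}) with σ^{α0}(x) = −x^{α0} ln F(x) for x > min(σ0,σ1). Then σ^{α0}(x) − p σ0^{α0} ∼ C0 x^{−β} as x → ∞, where β = min{α0, α1 − α0} and C0 = σ1^{α1}(1−p) if α1 − α0 < α0, C0 = σ1^{α1}(1−p) + p²σ0^{2α0}/2 if α1 − α0 = α0, and C0 = p²σ0^{2α0}/2 if α1 − α0 > α0. -/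
open Filter Real Topology

theorem aux_log_second_order :
    Tendsto (fun u : ℝ => (-Real.log (1 - u) - u) / u ^ 2) (𝓝[>] 0) (𝓝 (1 / 2)) := by
  have hb : Tendsto (fun u : ℝ => u / (1 - u)) (𝓝[>] 0) (𝓝 0) := by
    have : ContinuousAt (fun u : ℝ => u / (1 - u)) 0 := by
      apply ContinuousAt.div <;> first | fun_prop | norm_num
    have h := this.tendsto
    simp only [zero_div] at h
    exact h.mono_left nhdsWithin_le_nhds
  rw [tendsto_iff_norm_sub_tendsto_zero]
  refine squeeze_zero' (Eventually.of_forall fun _ => norm_nonneg _) ?_ hb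
  have h1 : ∀ᶠ u : ℝ in 𝓝[>] 0, u < 1 :=
    (eventually_lt_nhds (by norm_num : (0:ℝ) < 1)).filter_mono nhdsWithin_le_nhds
  filter_upwards [h1, self_mem_nhdsWithin] with u hu1 hu0
  have hu0 : 0 < u := hu0
  have h := Real.abs_log_sub_add_sum_range_le (x := u) (by rw [abs_of_pos hu0]; exact hu1) 2
  rw [abs_of_pos hu0] at h
  simp only [Finset.sum_range_succ, Finset.sum_range_zero] at h
  have e : (-Real.log (1 - u) - u) / u ^ 2 - 1 / 2
      = -((u + u ^ 2 / 2 + Real.log (1 - u)) / u ^ 2) := by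
    field_simp
    ring
  rw [e, norm_neg, Real.norm_eq_abs, abs_div, abs_of_pos (by positivity : 0 < u ^ 2),
    div_le_iff₀ (by positivity)]
  have e2 : u / (1 - u) * u ^ 2 = u ^ (2 + 1) / (1 - u) := by ring
  rw [e2]
  refine le_of_eq_of_le ?_ h
  congr 1
  norm_num

theorem aux_rpow_lim (β c : ℝ) (h : β ≤ c) :
    Tendsto (fun x : ℝ => x ^ (β - c)) atTop (𝓝 (if β = c then 1 else 0)) := by
  split_ifs with hc
  · subst hc
    simp
  · have := tendsto_rpow_neg_atTop (y := c - β) (by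
      have := lt_of_le_of_ne h hc
      linarith)
    simpa using this

/-- **Example (Mixtures of Pareto laws)**: for the Pareto-mixture c.d.f.
`F(x) = p(1-(x/σ0)^{-α0})1_{x≥σ0} + (1-p)(1-(x/σ1)^{-α1})1_{x≥σ1}` with `0 < α0 < α1`,
the tail representation `σ^{α0}(x) = -x^{α0} ln F(x)` satisfies
`σ^{α0}(x) - p σ0^{α0} ∼ C0 x^{-β}` as `x → ∞`, where `β = min{α0, α1-α0}` and `C0` is
the indicated case-dependent constant. -/
theorem pareto_mixture_exact_rate (α0 α1 σ0 σ1 p β C0 : ℝ)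
    (hα0 : 0 < α0) (hα01 : α0 < α1) (hσ0 : 0 < σ0) (hσ1 : 0 < σ1)
    (hp : p ∈ Set.Ioo (0 : ℝ) 1)
    (F : ℝ → ℝ)
    (hF : ∀ x : ℝ, F x =
        (if σ0 ≤ x then p * (1 - (x / σ0) ^ (-α0)) else 0) +
          (if σ1 ≤ x then (1 - p) * (1 - (x / σ1) ^ (-α1)) else 0))
    (hβ : β = min α0 (α1 - α0))
    (hC0 : C0 = if α1 - α0 < α0 then σ1 ^ α1 * (1 - p)
        else if α1 - α0 = α0 then σ1 ^ α1 * (1 - p) + p ^ 2 * σ0 ^ (2 * α0) / 2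
        else p ^ 2 * σ0 ^ (2 * α0) / 2) :
    Tendsto (fun x : ℝ => x ^ β * ((-(x ^ α0) * Real.log (F x)) - p * σ0 ^ α0))
      atTop (𝓝 C0) := by
  obtain ⟨hp0, hp1⟩ := hp
  have L1 := aux_rpow_lim β (α1 - α0) (hβ ▸ min_le_right _ _)
  have L2 := aux_rpow_lim β α0 (hβ ▸ min_le_left _ _)
  obtain ⟨a, ha⟩ : ∃ a, a = p * σ0 ^ α0 := ⟨_, rfl⟩
  obtain ⟨b, hb⟩ : ∃ b, b = σ1 ^ α1 * (1 - p) := ⟨_, rfl⟩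
  have ha0 : 0 < a := by rw [ha]; positivity
  have hb0 : 0 < b := by
    rw [hb]
    exact mul_pos (by positivity) (by linarith)
  have ha2 : p ^ 2 * σ0 ^ (2 * α0) = a ^ 2 := by
    rw [ha, mul_pow, mul_comm 2 α0, Real.rpow_mul hσ0.le]
    norm_num
  have hu : Tendsto (fun x : ℝ => a * x ^ (-α0) + b * x ^ (-α1)) atTop (𝓝[>] 0) := by
    rw [tendsto_nhdsWithin_iff]
    constructor
    · have := ((tendsto_rpow_neg_atTop hα0).const_mul a).add
        ((tendsto_rpow_neg_atTop (hα0.trans hα01)).const_mul b)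
      simpa using this
    · filter_upwards [eventually_gt_atTop 0] with x hx
      rw [Set.mem_Ioi]
      positivity
  have hg := aux_log_second_order.comp hu
  have hv : Tendsto (fun x : ℝ => a + b * x ^ (-(α1 - α0))) atTop (𝓝 a) := by
    have := ((tendsto_rpow_neg_atTop (sub_pos.2 hα01)).const_mul b).const_add a
    simpa using this
  have key := (L1.const_mul b).add ((L2.mul (hv.pow 2)).mul hg)
  have hC : C0 = b * (if β = α1 - α0 then 1 else 0)
      + (if β = α0 then 1 else 0) * a ^ 2 * (1 / 2) := by
    rw [hC0, ha2, ← hb, hβ]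
    rcases lt_trichotomy (α1 - α0) α0 with h | h | h
    · rw [min_eq_right h.le, if_pos h, if_pos rfl, if_neg h.ne]
      ring
    · rw [h, min_self, if_neg (lt_irrefl _), if_pos rfl, if_pos rfl]
      ring
    · rw [min_eq_left h.le, if_neg h.not_gt, if_neg h.ne', if_neg h.ne, if_pos rfl]
      ring
  rw [hC]
  refine key.congr' ?_
  filter_upwards [eventually_gt_atTop 0, eventually_ge_atTop σ0, eventually_ge_atTop σ1]
    with x hx h0 h1
  have hFx : F x = 1 - (a * x ^ (-α0) + b * x ^ (-α1)) := by
    rw [hF, if_pos h0, if_pos h1, Real.div_rpow hx.le hσ0.le, Real.div_rpow hx.le hσ1.le,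
      Real.rpow_neg hσ0.le, Real.rpow_neg hσ1.le, ha, hb, div_inv_eq_mul, div_inv_eq_mul]
    ring
  rw [hFx, ← ha]
  simp only [Function.comp]
  have hupos : 0 < a * x ^ (-α0) + b * x ^ (-α1) := by positivity
  have hX : 0 < x ^ α0 := by positivity
  have e1 : a + b * x ^ (-(α1 - α0)) = x ^ α0 * (a * x ^ (-α0) + b * x ^ (-α1)) := by
    have i1 : x ^ α0 * x ^ (-α0) = 1 := by rw [← Real.rpow_add hx]; simp
    have i2 : x ^ α0 * x ^ (-α1) = x ^ (-(α1 - α0)) := by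
      rw [← Real.rpow_add hx]; congr 1; ring
    rw [← i2]
    linear_combination (-a) * i1
  have e2 : b * x ^ (β - (α1 - α0))
      = x ^ β * (x ^ α0 * (a * x ^ (-α0) + b * x ^ (-α1)) - a) := by
    rw [← e1, sub_eq_add_neg β, Real.rpow_add hx]
    ring
  rw [e2, e1, Real.rpow_sub hx]
  generalize a * x ^ (-α0) + b * x ^ (-α1) = u at *
  field_simp
  ring
end

section
/- Let F(x) = exp(−σ^α(x) x^{−α}), x > 0, with σ(x) → σ0 > 0, satisfy Condition 1 with constants β, C1 > 0, let F_n(x) = exp(−σ^α(n^{1/α} x) x^{−α}) and G(x) = exp(−σ0^α x^{−α}). Then for any constant c ∈ (0, σ0^α) and any sequence ε(n) → 0 with n^{1/α} ε(n) → ∞, there is n0 such that for all n ≥ n0 and all x ∈ (ε(n), ∞): |F_n(x) − G(x)| ≤ C1 n^{−β/α} x^{−(α+β)} e^{−c x^{−α}}. -/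
open Filter Real Topology

theorem exp_diff_aux (m a b : ℝ) (ha : m ≤ a) (hab : a ≤ b) :
    |Real.exp (-a) - Real.exp (-b)| ≤ |a - b| * Real.exp (-m) := by
  have h1 : Real.exp (-b) = Real.exp (-a) * Real.exp (a - b) := by
    rw [← Real.exp_add]; congr 1; ring
  have h2 := Real.add_one_le_exp (a - b)
  have h3 : Real.exp (-b) ≤ Real.exp (-a) := Real.exp_le_exp.2 (by linarith)
  have h4 : Real.exp (-a) ≤ Real.exp (-m) := Real.exp_le_exp.2 (by linarith)
  have h5 := Real.exp_pos (-a)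
  rw [abs_of_nonneg (by linarith), abs_of_nonpos (by linarith)]
  calc Real.exp (-a) - Real.exp (-b) = Real.exp (-a) * (1 - Real.exp (a - b)) := by
        rw [h1]; ring
    _ ≤ Real.exp (-a) * (b - a) := mul_le_mul_of_nonneg_left (by linarith) h5.le
    _ ≤ Real.exp (-m) * (b - a) := mul_le_mul_of_nonneg_right h4 (by linarith)
    _ = _ := by ring

theorem exp_diff_aux2 (m a b : ℝ) (ha : m ≤ a) (hb : m ≤ b) :
    |Real.exp (-a) - Real.exp (-b)| ≤ |a - b| * Real.exp (-m) := by
  rcases le_total a b with h | h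
  · exact exp_diff_aux m a b ha h
  · rw [abs_sub_comm, abs_sub_comm a b]; exact exp_diff_aux m b a hb h

/-- **Uniform closeness of `F_n` to the Fréchet c.d.f. `G` away from the origin**: under
Condition 1, for any `c ∈ (0, σ0^α)` and any sequence `ε(n) → 0` with `n^{1/α} ε(n) → ∞`,
for all sufficiently large `n` and all `x > ε(n)`:
`|F_n(x) - G(x)| ≤ C1 n^{-β/α} x^{-(α+β)} e^{-c x^{-α}}`. -/
theorem Fn_minus_G_bound (α σ0 β C1 : ℝ)
    (hα : 0 < α) (hσ0 : 0 < σ0) (hβ : 0 < β) (hC1 : 0 < C1)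
    (F : ℝ → ℝ) (hF0 : ∀ x, 0 ≤ F x) (hF1 : ∀ x, F x ≤ 1)
    -- Condition 1 for the tail representation σ^α(x) = -x^α ln F(x)
    (hcond1 : ∀ᶠ x : ℝ in atTop,
        0 < F x ∧ |(-(x ^ α) * Real.log (F x)) - σ0 ^ α| ≤ C1 * x ^ (-β))
    (c : ℝ) (hc : c ∈ Set.Ioo 0 (σ0 ^ α))
    (ε : ℕ → ℝ) (hε : Tendsto ε atTop (𝓝 0))
    (hε' : Tendsto (fun n : ℕ => (n : ℝ) ^ ((1 : ℝ) / α) * ε n) atTop atTop) :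
    ∀ᶠ n : ℕ in atTop, ∀ x : ℝ, ε n < x →
      |(F ((n : ℝ) ^ ((1 : ℝ) / α) * x)) ^ n - Real.exp (-(σ0 ^ α * x ^ (-α)))| ≤
        C1 * (n : ℝ) ^ (-(β / α)) * (x ^ (-(α + β)) * Real.exp (-(c * x ^ (-α)))) := by
  obtain ⟨hc0, hc1⟩ := hc
  have hlim : Tendsto (fun y : ℝ => C1 * y ^ (-β)) atTop (𝓝 0) := by
    simpa using (tendsto_rpow_neg_atTop hβ).const_mul C1
  have hsmall : ∀ᶠ y : ℝ in atTop, C1 * y ^ (-β) < σ0 ^ α - c :=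
    hlim.eventually_lt_const (by linarith)
  obtain ⟨Y, hY⟩ := eventually_atTop.1 ((hcond1.and hsmall).and (eventually_gt_atTop 0))
  filter_upwards [hε'.eventually_ge_atTop Y, hε'.eventually_gt_atTop 0,
    eventually_ge_atTop 1] with n hn hn0 hn1 x hx
  have hnpos : (0 : ℝ) < n := by exact_mod_cast hn1
  have hr : (0 : ℝ) < (n : ℝ) ^ ((1 : ℝ) / α) := Real.rpow_pos_of_pos hnpos _
  have hxpos : 0 < x := lt_trans (pos_of_mul_pos_right hn0 hr.le) hx
  have hy : Y ≤ (n : ℝ) ^ ((1 : ℝ) / α) * x := hn.trans (mul_le_mul_of_nonneg_left hx.le hr.le)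
  obtain ⟨⟨⟨hFpos, hFb⟩, hs⟩, -⟩ := hY _ hy
  have hya : ((n : ℝ) ^ ((1 : ℝ) / α) * x) ^ α = n * x ^ α := by
    rw [Real.mul_rpow hr.le hxpos.le, ← Real.rpow_mul hnpos.le, one_div_mul_cancel hα.ne',
      Real.rpow_one]
  have hyb : ((n : ℝ) ^ ((1 : ℝ) / α) * x) ^ (-β) = (n : ℝ) ^ (-(β / α)) * x ^ (-β) := by
    rw [Real.mul_rpow hr.le hxpos.le, ← Real.rpow_mul hnpos.le]
    congr 2; ring
  rw [hya] at hFb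
  generalize F ((n : ℝ) ^ ((1 : ℝ) / α) * x) = f at *
  rw [hyb] at hFb hs
  have hxa : 0 < x ^ (-α) := Real.rpow_pos_of_pos hxpos _
  have hxx : x ^ α * x ^ (-α) = 1 := by
    rw [← Real.rpow_add hxpos, add_neg_cancel, Real.rpow_zero]
  set s := -(n * x ^ α) * Real.log f with hsdef
  have hf : f ^ n = Real.exp (-(s * x ^ (-α))) := by
    have : -(s * x ^ (-α)) = n * Real.log f := by
      rw [hsdef]; linear_combination (n * Real.log f) * hxx
    rw [this, Real.exp_nat_mul, Real.exp_log hFpos]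
  have hcs : c ≤ s := by
    have := (abs_le.1 hFb).1
    linarith
  rw [hf]
  refine (exp_diff_aux2 (c * x ^ (-α)) _ _ (mul_le_mul_of_nonneg_right hcs hxa.le)
    (mul_le_mul_of_nonneg_right hc1.le hxa.le)).trans ?_
  rw [← sub_mul, abs_mul, abs_of_pos hxa, ← mul_assoc]
  refine mul_le_mul_of_nonneg_right ?_ (Real.exp_pos _).le
  refine (mul_le_mul_of_nonneg_right hFb hxa.le).trans (le_of_eq ?_)
  rw [neg_add, Real.rpow_add hxpos]
  ring
end
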